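/- There exists a constant c' > 0 such that the following holds for all integers n ≥ 2. Let r = ⌈n^{1/3}⌉ and let M be a positive integer such that every red/blue coloring of the edges of the complete graph K_M contains a red clique K_r or a blue clique K_n, and suppose M ≤ n^r. Then for every N ≥ 2^{c'·n^{2/3}·log n}, every red/blue edge-coloring of the rectangular grid graph Γ_{N,M} contains a red rectangle or a blue K_n. -/

import Mathlib

/-- Adjacency in the grid graph `K_m □ K_n`. -/
def GridAdj {m n : ℕ} (p q : Fin m × Fin n) : Prop :=
  (p.1 = q.1 ∧ p.2 ≠ q.2) ∨ (p.1 ≠ q.1 ∧ p.2 = q.2)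

/-- A red `K_r` in an edge-coloring of `K_M` (red = `true`). -/
def HasRedClique (M r : ℕ) (χ : Sym2 (Fin M) → Bool) : Prop :=
  ∃ S : Finset (Fin M), S.card = r ∧ ∀ a ∈ S, ∀ b ∈ S, a ≠ b → χ s(a, b) = true

/-- A blue `K_n` in an edge-coloring of `K_M` (blue = `false`). -/
def HasBlueClique (M n : ℕ) (χ : Sym2 (Fin M) → Bool) : Prop :=
  ∃ S : Finset (Fin M), S.card = n ∧ ∀ a ∈ S, ∀ b ∈ S, a ≠ b → χ s(a, b) = false

/-- A red rectangle in an edge-coloring of `Γ_{N,M}` (red = `true`). -/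
def HasRedRect (N M : ℕ) (χ : Sym2 (Fin N × Fin M) → Bool) : Prop :=
  ∃ x x' : Fin N, ∃ y y' : Fin M, x ≠ x' ∧ y ≠ y' ∧
    χ s((x, y), (x', y)) = true ∧ χ s((x, y'), (x', y')) = true ∧
    χ s((x, y), (x, y')) = true ∧ χ s((x', y), (x', y')) = true

/-- A blue `K_n` in an edge-coloring of `Γ_{N,M}` (blue = `false`). -/
def HasBlueGridClique (N M n : ℕ) (χ : Sym2 (Fin N × Fin M) → Bool) : Prop :=
  ∃ S : Finset (Fin N × Fin M), S.card = n ∧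
    ∀ p ∈ S, ∀ q ∈ S, p ≠ q → GridAdj p q ∧ χ s(p, q) = false

/-- All distinct pairs of `K` are related. -/
def PairRel {V : Type*} (A : V → V → Prop) (K : Finset V) : Prop :=
  ∀ a ∈ K, ∀ b ∈ K, a ≠ b → A a b

open Finset in
/-- A crude bound on the number of small subsets of a finite set. -/
theorem card_small_subsets {V : Type*} [DecidableEq V] (I : Finset V) (t : ℕ) :
    (I.powerset.filter (fun T => T.card ≤ t)).card ≤ (I.card + 1) ^ t := by
  induction t with
  | zero =>
    have : I.powerset.filter (fun T => T.card ≤ 0) ⊆ {∅} := by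
      intro T hT
      simp at hT
      simp [hT.2]
    simpa using card_le_card this
  | succ t ih =>
    have hsub : I.powerset.filter (fun T => T.card ≤ t + 1) ⊆
        ((I.powerset.filter (fun T => T.card ≤ t)) ×ˢ (insertNone I)).image
          (fun p => p.2.elim p.1 (fun a => insert a p.1)) := by
      intro T hT
      rw [mem_filter, mem_powerset] at hT
      rw [mem_image]
      by_cases h : T.card ≤ t
      · exact ⟨(T, none), by simp [hT.1, h], rfl⟩
      · have hne : T.Nonempty := by
          rw [← card_pos]; omega
        obtain ⟨a, ha⟩ := hne
        refine ⟨(T.erase a, some a), ?_, by simp [insert_erase ha]⟩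
        rw [mem_product, mem_filter, mem_powerset]
        refine ⟨⟨(erase_subset _ _).trans hT.1, ?_⟩, ?_⟩
        · have := card_erase_of_mem ha
          simp only
          omega
        · simp [hT.1 ha]
    calc _ ≤ _ := card_le_card hsub
      _ ≤ _ := card_image_le
      _ = (I.powerset.filter (fun T => T.card ≤ t)).card * (I.card + 1) := by
        rw [card_product, card_insertNone]
      _ ≤ (I.card + 1) ^ t * (I.card + 1) := Nat.mul_le_mul_right _ ih
      _ = _ := by rw [pow_succ]

open Finset Classical in
/-- Crude asymmetric Ramsey bound. -/
theorem ramsey_crude {V : Type*} (A : V → V → Prop) (hs : ∀ a b, A a b → A b a) (n : ℕ)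
    (s : ℕ) : ∀ W : Finset V, n ^ s ≤ W.card →
    (∃ K ⊆ W, K.card = n ∧ ∀ a ∈ K, ∀ b ∈ K, a ≠ b → A a b) ∨
    (∃ J ⊆ W, J.card = s ∧ ∀ a ∈ J, ∀ b ∈ J, a ≠ b → ¬ A a b) := by
  induction s with
  | zero => intro W _; exact Or.inr ⟨∅, by simp, by simp, by simp⟩
  | succ s ih =>
    intro W hW
    obtain ⟨K, hK, hmax⟩ := exists_max_image
      (W.powerset.filter (PairRel A)) card ⟨∅, by simp [PairRel]⟩
    rw [mem_filter, mem_powerset] at hK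
    obtain ⟨hKW, hKc⟩ := hK
    by_cases hn : n ≤ K.card
    · obtain ⟨K', hK', hc⟩ := exists_subset_card_eq hn
      exact Or.inl ⟨K', hK'.trans hKW, hc, fun a ha b hb => hKc a (hK' ha) b (hK' hb)⟩
    push Not at hn
    -- the non-neighbourhoods of the vertices of `K` cover `W`
    have hcov : W ⊆ K.biUnion (fun v => insert v (W.filter (fun u => u ≠ v ∧ ¬ A v u))) := by
      intro u hu
      by_contra hcon
      simp only [mem_biUnion, mem_insert, mem_filter, not_exists, not_and, not_or, not_not]
        at hcon
      have huK : u ∉ K := fun h => (hcon u h).1 rfl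
      have hadj : ∀ v ∈ K, A v u := fun v hv => (hcon v hv).2 hu (hcon v hv).1
      have := hmax (insert u K) (by
        rw [mem_filter, mem_powerset]
        refine ⟨insert_subset hu hKW, ?_⟩
        intro a ha b hb hab
        rw [mem_insert] at ha hb
        rcases ha with rfl | ha <;> rcases hb with rfl | hb
        · exact absurd rfl hab
        · exact hs _ _ (hadj b hb)
        · exact hadj a ha
        · exact hKc a ha b hb hab)
      rw [card_insert_of_notMem huK] at this
      omega
    have hex : ∃ v ∈ K, n ^ s ≤ (W.filter (fun u => u ≠ v ∧ ¬ A v u)).card := by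
      by_contra hcon
      push Not at hcon
      have h1 : W.card ≤ K.card * n ^ s := by
        refine (card_le_card hcov).trans (card_biUnion_le_card_mul _ _ _ ?_)
        intro v hv
        have := hcon v hv
        have h2 := card_insert_le v (W.filter (fun u => u ≠ v ∧ ¬ A v u))
        omega
      have h2 : K.card * n ^ s < n * n ^ s :=
        Nat.mul_lt_mul_of_pos_right hn (pow_pos (by omega) s)
      rw [pow_succ, mul_comm] at hW
      omega
    obtain ⟨v, hv, hvc⟩ := hex
    rcases ih _ hvc with ⟨K', h1, h2, h3⟩ | ⟨J, h1, h2, h3⟩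
    · exact Or.inl ⟨K', h1.trans (filter_subset _ _), h2, h3⟩
    · have hvJ : v ∉ J := fun h => by simpa using h1 h
      refine Or.inr ⟨insert v J, insert_subset (hKW hv) (h1.trans (filter_subset _ _)), ?_, ?_⟩
      · rw [card_insert_of_notMem hvJ, h2]
      · have hadj : ∀ u ∈ J, ¬ A v u := fun u hu => (mem_filter.1 (h1 hu)).2.2
        intro a ha b hb hab
        rw [mem_insert] at ha hb
        rcases ha with rfl | ha <;> rcases hb with rfl | hb
        · exact absurd rfl hab
        · exact hadj b hb
        · exact fun h => hadj a ha (hs _ _ h)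
        · exact h3 a ha b hb hab

open Finset Classical in
/-- Erdős–Szemerédi: sparse graphs have large homogeneous sets. -/
theorem erdos_szemeredi {V : Type*} (A : V → V → Prop) (hs : ∀ a b, A a b → A b a)
    (C : Finset V) (n r t : ℕ) (hn : 0 < n)
    (hE : r * (∑ v ∈ C, (C.filter (fun u => A v u)).card) ≤ C.card ^ 2)
    (ht : 8 * n ≤ r * (t + 1)) (hC : 8 * n ^ (2 * t + 1) ≤ C.card) :
    (∃ K ⊆ C, K.card = n ∧ ∀ a ∈ K, ∀ b ∈ K, a ≠ b → A a b) ∨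
    (∃ J ⊆ C, J.card = n ∧ ∀ a ∈ J, ∀ b ∈ J, a ≠ b → ¬ A a b) := by
  have hnpow : n ≤ n ^ (2 * t + 1) := Nat.le_self_pow (by omega) n
  have hCpos : 0 < C.card := by omega
  set d : V → ℕ := fun v => (C.filter (fun u => A v u)).card with hd
  set U := C.filter (fun v => r * d v ≤ 2 * C.card) with hU
  have hUcard : C.card ≤ 2 * U.card := by
    have h1 : U.card + (C.filter (fun v => ¬ r * d v ≤ 2 * C.card)).card = C.card :=
      card_filter_add_card_filter_not _
    set B := C.filter (fun v => ¬ r * d v ≤ 2 * C.card) with hB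
    have h2 : B.card * (2 * C.card) ≤ ∑ v ∈ B, r * d v := by
      rw [← smul_eq_mul]
      refine card_nsmul_le_sum _ _ _ ?_
      intro v hv
      have := (mem_filter.1 hv).2
      omega
    have h3 : ∑ v ∈ B, r * d v ≤ ∑ v ∈ C, r * d v :=
      sum_le_sum_of_subset (filter_subset _ _)
    rw [← mul_sum C] at h3
    have h4 : (B.card * 2) * C.card ≤ C.card * C.card := by nlinarith
    have := Nat.le_of_mul_le_mul_right h4 hCpos
    omega
  obtain ⟨I, hI, hmax⟩ := exists_max_image
    (U.powerset.filter (PairRel (fun a b => ¬ A a b))) card ⟨∅, by simp [PairRel]⟩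
  rw [mem_filter, mem_powerset] at hI
  obtain ⟨hIU, hIi⟩ := hI
  have hUC : U ⊆ C := filter_subset _ _
  by_cases hIn : n ≤ I.card
  · obtain ⟨K', hK', hc⟩ := exists_subset_card_eq hIn
    exact Or.inr ⟨K', hK'.trans (hIU.trans hUC), hc,
      fun a ha b hb => hIi a (hK' ha) b (hK' hb)⟩
  push Not at hIn
  set T : V → Finset V := fun v => I.filter (fun u => A u v) with hT
  set P := C.filter (fun v => t + 1 ≤ (T v).card) with hP
  have hPcard : 4 * P.card ≤ C.card := by
    have h1 : P.card * (t + 1) ≤ ∑ v ∈ P, (T v).card := by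
      rw [← smul_eq_mul]
      exact card_nsmul_le_sum _ _ _ (fun v hv => (mem_filter.1 hv).2)
    have h2 : ∑ v ∈ P, (T v).card ≤ ∑ v ∈ C, (T v).card :=
      sum_le_sum_of_subset (filter_subset _ _)
    have h3 : ∑ v ∈ C, (T v).card = ∑ u ∈ I, d u := by
      simp only [hT, hd, card_filter]
      exact sum_comm
    have h4 : ∑ u ∈ I, r * d u ≤ I.card * (2 * C.card) := by
      rw [← smul_eq_mul]
      exact sum_le_card_nsmul _ _ _ (fun u hu => (mem_filter.1 (hIU hu)).2)
    rw [← mul_sum] at h4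
    have h5 : r * (P.card * (t + 1)) ≤ I.card * (2 * C.card) :=
      (Nat.mul_le_mul_left r (h1.trans (h2.trans h3.le))).trans h4
    have h6 : I.card * (2 * C.card) ≤ n * (2 * C.card) := Nat.mul_le_mul_right _ hIn.le
    have h7 : P.card * (8 * n) ≤ P.card * (r * (t + 1)) := Nat.mul_le_mul_left _ ht
    have h8 : (2 * n) * (4 * P.card) ≤ (2 * n) * C.card := by nlinarith
    exact Nat.le_of_mul_le_mul_left h8 (by omega)
  set X := (U \ P) \ I with hX
  have hXcard : n ^ (2 * t + 1) ≤ X.card := by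
    have h1 := le_card_sdiff I (U \ P)
    have h2 := le_card_sdiff P U
    rw [← hX] at h1
    omega
  have hXmaps : ∀ v ∈ X, T v ∈ I.powerset.filter (fun S => S.card ≤ t) := by
    intro v hv
    rw [mem_sdiff, mem_sdiff] at hv
    rw [mem_filter, mem_powerset]
    refine ⟨filter_subset _ _, ?_⟩
    by_contra hcon
    exact hv.1.2 (mem_filter.2 ⟨hUC hv.1.1, by omega⟩)
  have hcount : (I.powerset.filter (fun S => S.card ≤ t)).card * n ^ (t + 1) ≤ X.card := by
    refine le_trans ?_ hXcard
    have h1 := (card_small_subsets I t).trans (Nat.pow_le_pow_left (by omega : I.card + 1 ≤ n) t)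
    calc _ ≤ n ^ t * n ^ (t + 1) := Nat.mul_le_mul_right _ h1
      _ = _ := by rw [← pow_add]; congr 1; omega
  obtain ⟨S, hS, hSc⟩ := exists_le_card_fiber_of_mul_le_card_of_maps_to hXmaps
    ⟨∅, by simp⟩ hcount
  rw [mem_filter, mem_powerset] at hS
  have hWX : X.filter (fun v => T v = S) ⊆ X := filter_subset _ _
  have hXU : X ⊆ U := sdiff_subset.trans sdiff_subset
  rcases ramsey_crude A hs n (t + 1) _ hSc with ⟨K, h1, h2, h3⟩ | ⟨J, h1, h2, h3⟩
  · exact Or.inl ⟨K, h1.trans (hWX.trans (hXU.trans hUC)), h2, h3⟩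
  exfalso
  have hnon : ∀ a ∈ I \ S, ∀ b ∈ J, ¬ A a b := by
    intro a ha b hb hab
    have h4 := (mem_filter.1 (h1 hb)).2
    rw [mem_sdiff] at ha
    apply ha.2
    rw [← h4]
    exact mem_filter.2 ⟨ha.1, hab⟩
  have hdisj : Disjoint (I \ S) J := by
    rw [disjoint_left]
    intro a ha hb
    exact (mem_sdiff.1 (hWX (h1 hb))).2 (mem_sdiff.1 ha).1
  have := hmax ((I \ S) ∪ J) (by
    rw [mem_filter, mem_powerset]
    refine ⟨union_subset (sdiff_subset.trans hIU) (h1.trans (hWX.trans hXU)), ?_⟩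
    intro a ha b hb hab
    rw [mem_union] at ha hb
    rcases ha with ha | ha <;> rcases hb with hb | hb
    · exact hIi a (mem_sdiff.1 ha).1 b (mem_sdiff.1 hb).1 hab
    · exact hnon a ha b hb
    · exact fun h => hnon b hb a ha (hs _ _ h)
    · exact h3 a ha b hb hab)
  rw [card_union_of_disjoint hdisj] at this
  have h5 := le_card_sdiff S I
  omega

/-- The numerical estimates. -/
theorem numeric_bound (n : ℕ) (hn : 2 ≤ n) (r : ℕ) (hr : r = ⌈(n : ℝ) ^ ((1 : ℝ) / 3)⌉₊)
    (N : ℕ) (hN : (2 : ℝ) ^ (24 * (n : ℝ) ^ ((2 : ℝ) / 3) * Real.logb 2 n) ≤ N) :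
    2 ≤ r ∧ n ^ (r * r) * (8 * n ^ (2 * (8 * n / r) + 1)) ≤ N := by
  have hn0 : (0 : ℝ) ≤ n := Nat.cast_nonneg n
  have hn2 : (2 : ℝ) ≤ n := by exact_mod_cast hn
  set x : ℝ := (n : ℝ) ^ ((1 : ℝ) / 3) with hx
  have hx1 : 1 < x := Real.one_lt_rpow (by linarith) (by norm_num)
  have hx2 : (n : ℝ) ^ ((2 : ℝ) / 3) = x ^ 2 := by
    rw [hx, ← Real.rpow_natCast, ← Real.rpow_mul hn0]; norm_num
  have hx3 : (n : ℝ) = x ^ 3 := by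
    rw [hx, ← Real.rpow_natCast, ← Real.rpow_mul hn0]; norm_num
  have hxr : x ≤ r := by rw [hr]; exact Nat.le_ceil x
  have hrx : (r : ℝ) < x + 1 := by rw [hr]; exact Nat.ceil_lt_add_one (by linarith)
  have hr2 : 2 ≤ r := by
    have : (1 : ℝ) < r := by linarith
    exact_mod_cast this
  refine ⟨hr2, ?_⟩
  set t := 8 * n / r with ht
  have htx : (t : ℝ) ≤ 8 * x ^ 2 := by
    have h1 : t * r ≤ 8 * n := Nat.div_mul_le_self _ _
    have h2 : (t : ℝ) * r ≤ 8 * x ^ 3 := by rw [← hx3]; exact_mod_cast h1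
    have h3 : (t : ℝ) * x ≤ t * r := mul_le_mul_of_nonneg_left hxr (Nat.cast_nonneg t)
    have h4 : (t : ℝ) * x ≤ (8 * x ^ 2) * x := by nlinarith
    exact le_of_mul_le_mul_right h4 (by linarith)
  have hexp : (((r * r + 3 + (2 * t + 1) : ℕ)) : ℝ) ≤ 24 * x ^ 2 := by
    push_cast
    nlinarith
  have hnat : n ^ (r * r) * (8 * n ^ (2 * t + 1)) ≤ n ^ (r * r + 3 + (2 * t + 1)) := by
    rw [pow_add n _ (2 * t + 1), pow_add n (r * r) 3, mul_assoc]
    have h8 : 8 ≤ n ^ 3 := by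
      calc 8 = 2 ^ 3 := by norm_num
        _ ≤ n ^ 3 := Nat.pow_le_pow_left hn 3
    exact Nat.mul_le_mul_left _ (Nat.mul_le_mul_right _ h8)
  refine hnat.trans ?_
  have hreal : ((n : ℝ)) ^ (r * r + 3 + (2 * t + 1) : ℕ) ≤ N := by
    refine le_trans ?_ hN
    rw [mul_comm (24 * _) (Real.logb 2 n), Real.rpow_mul (by norm_num : (0 : ℝ) ≤ 2),
      Real.rpow_logb (by norm_num) (by norm_num) (by linarith), hx2, ← Real.rpow_natCast]
    exact Real.rpow_le_rpow_of_exponent_le (by linarith) hexp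
  exact_mod_cast hreal

/-- There is `c' > 0` such that for all `n ≥ 2`, with `r = ⌈n^(1/3)⌉` and `M` a positive
integer such that every red/blue edge-coloring of `K_M` contains a red `K_r` or a blue
`K_n`, and `M ≤ n^r`: for every `N ≥ 2^(c' n^(2/3) log₂ n)`, every red/blue
edge-coloring of `Γ_{N,M}` contains a red rectangle or a blue `K_n`. -/
theorem rectangular_grid_upper_bound :
    ∃ c' : ℝ, 0 < c' ∧ ∀ n : ℕ, 2 ≤ n →
      ∀ M : ℕ, 0 < M →
        (∀ χ : Sym2 (Fin M) → Bool,
          HasRedClique M ⌈(n : ℝ) ^ ((1 : ℝ) / 3)⌉₊ χ ∨ HasBlueClique M n χ) →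
        M ≤ n ^ ⌈(n : ℝ) ^ ((1 : ℝ) / 3)⌉₊ →
        ∀ N : ℕ, (2 : ℝ) ^ (c' * (n : ℝ) ^ ((2 : ℝ) / 3) * Real.logb 2 n) ≤ N →
          ∀ χ : Sym2 (Fin N × Fin M) → Bool,
            HasRedRect N M χ ∨ HasBlueGridClique N M n χ := by
  classical
  refine ⟨24, by norm_num, ?_⟩
  intro n hn M hM hram hMn N hN χ
  by_contra hcon
  push Not at hcon
  obtain ⟨hnr, hnb⟩ := hcon
  obtain ⟨r, hr⟩ : ∃ r : ℕ, r = ⌈(n : ℝ) ^ ((1 : ℝ) / 3)⌉₊ := ⟨_, rfl⟩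
  obtain ⟨hr2, hNbig⟩ := numeric_bound n hn r hr N hN
  rw [← hr] at hram hMn
  -- every column contains a red clique
  have hcol : ∀ x : Fin N, ∃ S : Finset (Fin M), S.card = r ∧
      ∀ a ∈ S, ∀ b ∈ S, a ≠ b → χ s((x, a), (x, b)) = true := by
    intro x
    rcases hram (fun e => χ (e.map (fun y => (x, y)))) with h | ⟨S, hS, hb⟩
    · exact h
    · exfalso
      apply hnb
      refine ⟨S.image (fun y => (x, y)), ?_, ?_⟩
      · rw [Finset.card_image_of_injective _ (Prod.mk_right_injective x), hS]
      · intro p hp q hq hpq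
        rw [Finset.mem_image] at hp hq
        obtain ⟨a, ha, rfl⟩ := hp
        obtain ⟨b, hb', rfl⟩ := hq
        have hab : a ≠ b := fun h => hpq (by rw [h])
        exact ⟨Or.inl ⟨rfl, hab⟩, hb a ha b hb' hab⟩
  choose F hFc hFr using hcol
  -- pigeonhole over the columns
  have hcount : (Finset.powersetCard r (Finset.univ : Finset (Fin M))).card *
      (8 * n ^ (2 * (8 * n / r) + 1)) ≤ (Finset.univ : Finset (Fin N)).card := by
    rw [Finset.card_powersetCard, Finset.card_univ, Finset.card_univ, Fintype.card_fin,
      Fintype.card_fin]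
    refine le_trans (Nat.mul_le_mul_right _ ?_) hNbig
    calc M.choose r ≤ M ^ r := Nat.choose_le_pow M r
      _ ≤ (n ^ r) ^ r := Nat.pow_le_pow_left hMn r
      _ = n ^ (r * r) := by rw [← pow_mul]
  have hNpos : 0 < N := lt_of_lt_of_le (by positivity) hNbig
  have hmaps : ∀ x ∈ (Finset.univ : Finset (Fin N)),
      F x ∈ Finset.powersetCard r (Finset.univ : Finset (Fin M)) := fun x _ =>
    Finset.mem_powersetCard.2 ⟨Finset.subset_univ _, hFc x⟩
  obtain ⟨S, hS, hSC⟩ := Finset.exists_le_card_fiber_of_mul_le_card_of_maps_to hmaps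
    ⟨_, hmaps ⟨0, hNpos⟩ (Finset.mem_univ _)⟩ hcount
  have hSr : S.card = r := (Finset.mem_powersetCard.1 hS).2
  set C := Finset.univ.filter (fun x => F x = S) with hC
  have hCS : ∀ x ∈ C, F x = S := fun x hx => (Finset.mem_filter.1 hx).2
  let A : Fin M → Fin N → Fin N → Prop := fun y u v => u ≠ v ∧ χ s((u, y), (v, y)) = true
  have hsym : ∀ y a b, A y a b → A y b a := by
    intro y a b h
    exact ⟨h.1.symm, by rw [Sym2.eq_swap]; exact h.2⟩
  have hdisj : ∀ u ∈ C, ∀ v ∈ C, ∀ y ∈ S, ∀ y' ∈ S, A y u v → A y' u v → y = y' := by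
    intro u hu v hv y hy y' hy' h h'
    by_contra hne
    apply hnr
    refine ⟨u, v, y, y', h.1, hne, h.2, h'.2, ?_, ?_⟩
    · exact hFr u y (by rw [hCS u hu]; exact hy) y' (by rw [hCS u hu]; exact hy') hne
    · exact hFr v y (by rw [hCS v hv]; exact hy) y' (by rw [hCS v hv]; exact hy') hne
  -- the total number of red pairs
  have hsum : ∑ y ∈ S, ∑ u ∈ C, (C.filter (fun v => A y u v)).card ≤ C.card ^ 2 := by
    rw [Finset.sum_comm, sq]
    rw [← smul_eq_mul]
    refine Finset.sum_le_card_nsmul _ _ _ ?_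
    intro u hu
    rw [← Finset.card_biUnion]
    · refine Finset.card_le_card ?_
      intro v hv
      rw [Finset.mem_biUnion] at hv
      obtain ⟨y, _, hv⟩ := hv
      exact (Finset.mem_filter.1 hv).1
    · intro y hy y' hy' hne
      rw [Function.onFun, Finset.disjoint_left]
      intro v hv hv'
      rw [Finset.mem_filter] at hv hv'
      exact hne (hdisj u hu v hv.1 y hy y' hy' hv.2 hv'.2)
  have hSne : S.Nonempty := by rw [← Finset.card_pos]; omega
  obtain ⟨y, hy, hymin⟩ := Finset.exists_min_image S
    (fun y => ∑ u ∈ C, (C.filter (fun v => A y u v)).card) hSne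
  have hE : r * (∑ u ∈ C, (C.filter (fun v => A y u v)).card) ≤ C.card ^ 2 := by
    refine le_trans ?_ hsum
    rw [← hSr, ← smul_eq_mul]
    exact Finset.card_nsmul_le_sum _ _ _ hymin
  -- a blue clique in a row
  have hrow : ∀ (z : Fin M) (K : Finset (Fin N)), K.card = n →
      (∀ a ∈ K, ∀ b ∈ K, a ≠ b → χ s((a, z), (b, z)) = false) → False := by
    intro z K hK hb
    apply hnb
    refine ⟨K.image (fun x => (x, z)), ?_, ?_⟩
    · rw [Finset.card_image_of_injective _ (Prod.mk_left_injective z), hK]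
    · intro p hp q hq hpq
      rw [Finset.mem_image] at hp hq
      obtain ⟨a, ha, rfl⟩ := hp
      obtain ⟨b, hb', rfl⟩ := hq
      have hab : a ≠ b := fun h => hpq (by rw [h])
      exact ⟨Or.inr ⟨hab, rfl⟩, hb a ha b hb' hab⟩
  have ht : 8 * n ≤ r * (8 * n / r + 1) := (Nat.lt_mul_div_succ (8 * n) (by omega)).le
  rcases erdos_szemeredi (A y) (hsym y) C n r (8 * n / r) (by omega) (by convert hE) ht hSC with
    ⟨K, hKC, hKn, hK⟩ | ⟨K, hKC, hKn, hK⟩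
  · obtain ⟨z, hz, hzy⟩ := Finset.exists_mem_ne (by omega : 1 < S.card) y
    refine hrow z K hKn ?_
    intro a ha b hb hab
    rw [← Bool.not_eq_true]
    intro h
    exact hzy (hdisj a (hKC ha) b (hKC hb) z hz y hy ⟨hab, h⟩ (hK a ha b hb hab))
  · refine hrow y K hKn ?_
    intro a ha b hb hab
    rw [← Bool.not_eq_true]
    exact fun h => hK a ha b hb hab ⟨hab, h⟩
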